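/- Let a, b, c ∈ K with c ≠ 0 and let G(X,Y) = (Y−b)^p − (X−a)^q + c(X−a)(Y−b) ∈ K[X,Y]. Then G is a normed Weierstraß polynomial of type p,q (i.e., G = Y^p − X^q + Σ_{(ν,μ)∈I} a_{νμ} X^ν Y^μ for suitable a_{νμ} ∈ K), and the curve G = 0 has exactly one singular point, namely (a,b), and this singular point is a node. -/

import Mathlib

open MvPolynomial

/-- The index set `I` of pairs `(ν,μ)` of nonnegative integers with `νp + μq < pq`
(for `p, q ≥ 1` the conditions `ν < q`, `μ < p` are automatic). -/
def idxSet (p q : ℕ) : Finset (ℕ × ℕ) :=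
  (Finset.range q ×ˢ Finset.range p).filter fun t => t.1 * p + t.2 * q < p * q

/-- The normed Weierstraß polynomial `F_α = Y^p − X^q + Σ a_{νμ} X^ν Y^μ`,
as a polynomial in two variables `X 0 = X`, `X 1 = Y`. -/
noncomputable def wPoly (K : Type) [CommRing K] (p q : ℕ) (a : idxSet p q → K) :
    MvPolynomial (Fin 2) K :=
  X 1 ^ p - X 0 ^ q + ∑ i : idxSet p q, C (a i) * X 0 ^ (i : ℕ × ℕ).1 * X 1 ^ (i : ℕ × ℕ).2

/-- The Hessian determinant `G_{XX} G_{YY} − G_{XY}²` of a polynomial in `X, Y`. -/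
noncomputable def hessPoly (K : Type) [CommRing K] (G : MvPolynomial (Fin 2) K) :
    MvPolynomial (Fin 2) K :=
  pderiv 0 (pderiv 0 G) * pderiv 1 (pderiv 1 G) - (pderiv 0 (pderiv 1 G)) ^ 2

/-- `P` is a singular point of the curve `G = 0`. -/
def IsSingAt (K : Type) [CommRing K] (G : MvPolynomial (Fin 2) K) (P : K × K) : Prop :=
  eval ![P.1, P.2] G = 0 ∧ eval ![P.1, P.2] (pderiv 0 G) = 0 ∧ eval ![P.1, P.2] (pderiv 1 G) = 0

/-- `P` is a node of the curve `G = 0`. -/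
def IsNodeAt (K : Type) [CommRing K] (G : MvPolynomial (Fin 2) K) (P : K × K) : Prop :=
  IsSingAt K G P ∧ eval ![P.1, P.2] (hessPoly K G) ≠ 0

/-!
Translation by `(a, b)` changes `Y ^ p - X ^ q` only in monomials of weight `< pq`, where `X` has
weight `p` and `Y` has weight `q`; the monomial `XY` has weight `p + q < pq`. This gives the
Weierstraß form. At a singular point of `f = y ^ p - x ^ q + c x y`, where `x = X - a` and
`y = Y - b`, Euler's relation for the weighted homogeneous part `y ^ p - x ^ q` of degree `pq`
leaves `(pq - p - q) c x y = 0`, so `x` or `y` vanishes, and then `f_x = 0` or `f_y = 0` kills the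
other. The Hessian determinant at `(a, b)` is `-c ^ 2`, since `p` and `q` are not both `2`.
-/

lemma one_lt_of_add_lt_mul {p q : ℕ} (h : p + q < p * q) : 1 < p ∧ 1 < q := by
  constructor <;> by_contra! hle <;> nlinarith [p.zero_le, q.zero_le]

lemma add_algebraMap_pow_sub_pow_mem_span {R A : Type*} [CommSemiring R] [Ring A] [Algebra R A]
    (x : A) (r : R) (n : ℕ) :
    (x + algebraMap R A r) ^ n - x ^ n ∈ Submodule.span R ((x ^ ·) '' Set.Iio n) := by
  have hexpand : (x + algebraMap R A r) ^ n - x ^ n =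
      ∑ m ∈ Finset.range n, (r ^ (n - m) * n.choose m) • x ^ m := by
    rw [(Algebra.commute_algebraMap_right r x).add_pow, Finset.sum_range_succ]
    simp only [Nat.sub_self, pow_zero, mul_one, Nat.choose_self, Nat.cast_one,
      add_sub_cancel_right]
    refine Finset.sum_congr rfl fun m _ => ?_
    rw [Algebra.smul_def, Algebra.commutes, map_mul, map_pow, map_natCast, mul_assoc]
  rw [hexpand]
  exact Submodule.sum_smul_mem _ _ fun m hm =>
    Submodule.subset_span ⟨m, Finset.mem_range.mp hm, rfl⟩

section WeierstrassForm

variable {K : Type*} [CommRing K] {p q : ℕ}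

lemma mem_idxSet {t : ℕ × ℕ} : t ∈ idxSet p q ↔ t.1 * p + t.2 * q < p * q := by
  simp only [idxSet, Finset.mem_filter, Finset.mem_product, Finset.mem_range,
    and_iff_right_iff_imp]
  intro h
  constructor <;> by_contra! hle <;> nlinarith [Nat.zero_le (t.1 * p), Nat.zero_le (t.2 * q)]

/-- The space `⊕ K X^ν Y^μ`, `(ν,μ) ∈ I`, of admissible lower-order parts of a normed Weierstraß
polynomial of type `p,q`. -/
noncomputable def lowerTerms (K : Type*) [CommRing K] (p q : ℕ) :
    Submodule K (MvPolynomial (Fin 2) K) :=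
  Submodule.span K (Set.range fun i : idxSet p q => X 0 ^ (i : ℕ × ℕ).1 * X 1 ^ (i : ℕ × ℕ).2)

lemma X_pow_mul_X_pow_mem_lowerTerms {i j : ℕ} (h : i * p + j * q < p * q) :
    X 0 ^ i * X 1 ^ j ∈ lowerTerms K p q :=
  Submodule.subset_span ⟨⟨(i, j), mem_idxSet.mpr h⟩, rfl⟩

lemma exists_eq_wPoly_iff {K : Type} [CommRing K] {F : MvPolynomial (Fin 2) K} :
    (∃ co : idxSet p q → K, F = wPoly K p q co) ↔
      F - (X 1 ^ p - X 0 ^ q) ∈ lowerTerms K p q := by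
  rw [lowerTerms, Submodule.mem_span_range_iff_exists_fun]
  refine exists_congr fun co => ?_
  simp only [wPoly, smul_eq_C_mul, mul_assoc]
  rw [eq_sub_iff_add_eq', eq_comm]

lemma X_zero_sub_C_pow_sub_pow_mem_lowerTerms (hp : 0 < p) (a : K) :
    (X 0 - C a) ^ q - X 0 ^ q ∈ lowerTerms K p q := by
  have hspan := add_algebraMap_pow_sub_pow_mem_span (X 0 : MvPolynomial (Fin 2) K) (-a) q
  rw [map_neg, ← sub_eq_add_neg] at hspan
  refine Submodule.span_le.mpr ?_ hspan
  rintro _ ⟨m, hm : m < q, rfl⟩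
  simpa using X_pow_mul_X_pow_mem_lowerTerms (K := K) (p := p) (q := q) (i := m) (j := 0)
    (by nlinarith)

lemma X_one_sub_C_pow_sub_pow_mem_lowerTerms (hq : 0 < q) (b : K) :
    (X 1 - C b) ^ p - X 1 ^ p ∈ lowerTerms K p q := by
  have hspan := add_algebraMap_pow_sub_pow_mem_span (X 1 : MvPolynomial (Fin 2) K) (-b) p
  rw [map_neg, ← sub_eq_add_neg] at hspan
  refine Submodule.span_le.mpr ?_ hspan
  rintro _ ⟨m, hm : m < p, rfl⟩
  simpa using X_pow_mul_X_pow_mem_lowerTerms (K := K) (p := p) (q := q) (i := 0) (j := m)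
    (by nlinarith)

lemma X_sub_C_mul_X_sub_C_mem_lowerTerms (hpq : p + q < p * q) (a b : K) :
    (X 0 - C a) * (X 1 - C b) ∈ lowerTerms K p q := by
  have hXY : X 0 ^ 1 * X 1 ^ 1 ∈ lowerTerms K p q := X_pow_mul_X_pow_mem_lowerTerms (by lia)
  have hX : X 0 ^ 1 * X 1 ^ 0 ∈ lowerTerms K p q := X_pow_mul_X_pow_mem_lowerTerms (by lia)
  have hY : X 0 ^ 0 * X 1 ^ 1 ∈ lowerTerms K p q := X_pow_mul_X_pow_mem_lowerTerms (by lia)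
  have hone : X 0 ^ 0 * X 1 ^ 0 ∈ lowerTerms K p q := X_pow_mul_X_pow_mem_lowerTerms (by lia)
  convert add_mem (sub_mem (sub_mem hXY (Submodule.smul_mem _ b hX)) (Submodule.smul_mem _ a hY))
    (Submodule.smul_mem _ (a * b) hone) using 1
  simp only [smul_eq_C_mul, map_mul]
  ring

end WeierstrassForm

lemma eq_zero_of_nodal_equations {R : Type*} [CommRing R] [IsDomain R] {p q : ℕ} (hp : 1 < p)
    (hq : 1 < q) (hR : (p + q : R) ≠ p * q) {c x y : R} (hc : c ≠ 0)
    (hf : y ^ p - x ^ q + c * x * y = 0) (hfx : -(q * x ^ (q - 1)) + c * y = 0)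
    (hfy : p * y ^ (p - 1) + c * x = 0) :
    x = 0 ∧ y = 0 := by
  have hx_pow : x ^ (q - 1) * x = x ^ q := pow_sub_one_mul (by lia) x
  have hy_pow : y ^ (p - 1) * y = y ^ p := pow_sub_one_mul (by lia) y
  have heuler : (p * q - (p + q) : R) * (c * (x * y)) = 0 := by
    linear_combination (p * q : R) * hf - p * x * hfx - q * y * hfy - p * q * hx_pow +
      p * q * hy_pow
  have hxy : x = 0 ∨ y = 0 := by
    simpa only [mul_eq_zero, sub_ne_zero.mpr hR.symm, hc, false_or] using heuler
  have hp' : p - 1 ≠ 0 := by lia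
  have hq' : q - 1 ≠ 0 := by lia
  rcases hxy with rfl | rfl
  · simpa [hq', hc] using hfx
  · simpa [hp', hc] using hfy

/-- The polynomial `G = (Y - b)^p - (X - a)^q + c (X - a)(Y - b)`, with `X 0 = X` and `X 1 = Y`; for
`c ≠ 0` its curve has a node at `(a, b)`. -/
noncomputable def nodePoly {K : Type*} [CommRing K] (p q : ℕ) (a b c : K) :
    MvPolynomial (Fin 2) K :=
  (X 1 - C b) ^ p - (X 0 - C a) ^ q + C c * (X 0 - C a) * (X 1 - C b)

section NodePoly

variable {K : Type} [CommRing K] {p q : ℕ} (a b c : K)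

lemma exists_nodePoly_eq_wPoly (hpq : p + q < p * q) :
    ∃ co : idxSet p q → K, nodePoly p q a b c = wPoly K p q co := by
  obtain ⟨hp, hq⟩ := one_lt_of_add_lt_mul hpq
  have hmem := add_mem
    (sub_mem (X_one_sub_C_pow_sub_pow_mem_lowerTerms (p := p) (q := q) (by lia) b)
      (X_zero_sub_C_pow_sub_pow_mem_lowerTerms (by lia) a))
    (Submodule.smul_mem _ c (X_sub_C_mul_X_sub_C_mem_lowerTerms hpq a b))
  rw [exists_eq_wPoly_iff]
  convert hmem using 1
  rw [nodePoly, smul_eq_C_mul]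
  ring

lemma pderiv_zero_nodePoly (p q : ℕ) :
    pderiv 0 (nodePoly p q a b c) =
      -((q : MvPolynomial (Fin 2) K) * (X 0 - C a) ^ (q - 1)) + C c * (X 1 - C b) := by
  simp [nodePoly, pderiv_X, Derivation.leibniz, Derivation.leibniz_pow, mul_comm]

lemma pderiv_one_nodePoly (p q : ℕ) :
    pderiv 1 (nodePoly p q a b c) =
      (p : MvPolynomial (Fin 2) K) * (X 1 - C b) ^ (p - 1) + C c * (X 0 - C a) := by
  simp [nodePoly, pderiv_X, Derivation.leibniz, Derivation.leibniz_pow]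

lemma isSingAt_nodePoly_iff (p q : ℕ) (P : K × K) :
    IsSingAt K (nodePoly p q a b c) P ↔
      (P.2 - b) ^ p - (P.1 - a) ^ q + c * (P.1 - a) * (P.2 - b) = 0 ∧
      -(q * (P.1 - a) ^ (q - 1)) + c * (P.2 - b) = 0 ∧
      p * (P.2 - b) ^ (p - 1) + c * (P.1 - a) = 0 := by
  simp only [IsSingAt, pderiv_zero_nodePoly, pderiv_one_nodePoly]
  simp [nodePoly]

lemma eval_hessPoly_nodePoly (hpq : p + q < p * q) :
    eval ![a, b] (hessPoly K (nodePoly p q a b c)) = -c ^ 2 := by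
  obtain ⟨hp, hq⟩ := one_lt_of_add_lt_mul hpq
  have hexp : p - 1 - 1 ≠ 0 ∨ q - 1 - 1 ≠ 0 := by
    by_contra! h
    obtain ⟨rfl, rfl⟩ : p = 2 ∧ q = 2 := by lia
    lia
  rcases hexp with h | h <;>
    simp [hessPoly, pderiv_zero_nodePoly, pderiv_one_nodePoly, pderiv_X, Derivation.leibniz,
      Derivation.leibniz_pow, h]

lemma isSingAt_nodePoly_iff_eq [IsDomain K] (hp : 1 < p) (hq : 1 < q)
    (hK : (p + q : K) ≠ p * q) (hc : c ≠ 0) (P : K × K) :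
    IsSingAt K (nodePoly p q a b c) P ↔ P = (a, b) := by
  rw [isSingAt_nodePoly_iff]
  constructor
  · rintro ⟨hf, hfx, hfy⟩
    obtain ⟨hx, hy⟩ := eq_zero_of_nodal_equations hp hq hK hc hf hfx hfy
    exact Prod.ext (sub_eq_zero.mp hx) (sub_eq_zero.mp hy)
  · rintro rfl
    have hp' : p - 1 ≠ 0 := by lia
    have hq' : q - 1 ≠ 0 := by lia
    simp [hp', hq', show p ≠ 0 by lia, show q ≠ 0 by lia]

end NodePoly

theorem example_curve_with_one_node_general
    (K : Type) [CommRing K] [IsDomain K] (p q : ℕ) (hpq : p + q < p * q)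
    (hK : (p + q : K) ≠ p * q) (a b c : K) (hc : c ≠ 0) :
    ∃ co : idxSet p q → K,
      (X 1 - C b) ^ p - (X 0 - C a) ^ q + C c * (X 0 - C a) * (X 1 - C b) = wPoly K p q co ∧
      (∀ P : K × K, IsSingAt K (wPoly K p q co) P ↔ P = (a, b)) ∧
      IsNodeAt K (wPoly K p q co) (a, b) := by
  obtain ⟨hp, hq⟩ := one_lt_of_add_lt_mul hpq
  obtain ⟨co, hco⟩ := exists_nodePoly_eq_wPoly a b c hpq
  have hsing := isSingAt_nodePoly_iff_eq a b c hp hq hK hc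
  have hhess : eval ![a, b] (hessPoly K (nodePoly p q a b c)) ≠ 0 := by
    rw [eval_hessPoly_nodePoly a b c hpq]
    exact neg_ne_zero.mpr (pow_ne_zero 2 hc)
  refine ⟨co, hco, ?_⟩
  rw [← hco]
  exact ⟨hsing, (hsing _).mpr rfl, hhess⟩

/-- The curve `(Y−b)^p − (X−a)^q + c(X−a)(Y−b) = 0` (with `c ≠ 0`) is given by a normed
Weierstraß polynomial of type `p,q`, and it has exactly one singular point, namely `(a,b)`,
which is a node. -/
theorem example_curve_with_one_node
    (K : Type) [Field K] [IsAlgClosed K] [CharZero K]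
    (p q : ℕ) (hp : 1 < p) (hpq : p < q) (hco : Nat.Coprime p q)
    (a b c : K) (hc : c ≠ 0) :
    ∃ co : idxSet p q → K,
      (X 1 - C b) ^ p - (X 0 - C a) ^ q + C c * (X 0 - C a) * (X 1 - C b) = wPoly K p q co ∧
      (∀ P : K × K,
        IsSingAt K (wPoly K p q co) P ↔ P = (a, b)) ∧
      IsNodeAt K (wPoly K p q co) (a, b) := by
  have hlt : p + q < p * q := by nlinarith
  exact example_curve_with_one_node_general K p q hlt (by exact_mod_cast hlt.ne) a b c hc
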